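/- Let m ≥ 1 and σ > 0. Let Z be an ℝ^m-valued random vector that is σ-subgaussian, let Q : ℝ^m → ℤ^m be elementwise rounding to the nearest integer, let g : ℤ^m → {1, 2, 3, …} be a bijection such that ‖a‖_∞ > ‖b‖_∞ implies g(a) > g(b), and let q̄ = g(Q(Z)). Then: (i) for every m ≥ 1 there exists β > 2²/(∑_{i=1}^∞ i^{−2}) such that the probability mass function of q̄ satisfies P[q̄ = z] ≤ min(β z^{−2}, 1) for all positive integers z (power-law envelope class with parameters (2, β)); (ii) if m = 1, there exists β > e^{2α} with α = 1/(8σ²) such that P[q̄ = z] ≤ min(β e^{−α z}, 1) for all positive integers z, and if m = 2 the same holds with α = 1/(16σ²) (exponential envelope class with parameters (α, β)). -/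

import Mathlib

/-!
Let `z = g a` and `k = ‖a‖_∞`. Everything follows from two facts.

* Counting (`pnat_le_pow`): monotonicity of `g` puts the `z` preimages of `1, …, z` into the cube
  `{-k, …, k}^m`, so `z ≤ (2k+1)^m`.
* Chernoff (`prob_le_exp`): on `{Q(Z) = a}` some signed coordinate `±Z i` is at least `k - 1/2`,
  so this event has probability at most `exp(-(k-1/2)²/(2σ²))`, hence at most `exp(-(k²-k)/(2σ²))`;
  the latter bound is also true for `k = 0`.

With `s = 1/(2σ²)`, each envelope then reduces to the boundedness of a quadratic polynomial in `k`
with negative leading coefficient. For `m = 1` and `m = 2` the exponents `s/4 * (2k+1)` and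
`s/8 * (2k+1)²` are dominated by `s * k²` up to lower-order terms; for the power law the polynomial
`(2k+1)^(2m)` is first replaced by `(2m)! * exp(2k+1)`.
-/


open MeasureTheory
open scoped Matrix

/-- The Euclidean (ℓ²) norm of a vector in `ℝ^m`. -/
noncomputable def eucNorm {m : ℕ} (v : Fin m → ℝ) : ℝ :=
  Real.sqrt (∑ i, v i ^ 2)

/-- The ℓ∞ norm `max_j |z j|` (as a natural number) of an integer vector in `ℤ^m`. -/
def zinf {m : ℕ} (z : Fin m → ℤ) : ℕ :=
  Finset.univ.sup fun j => (z j).natAbs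

/-- Elementwise rounding to the nearest integer: `[Q x]ᵢ = k` exactly when
`x i ∈ [k - 1/2, k + 1/2)`. -/
noncomputable def roundv {m : ℕ} (x : Fin m → ℝ) : Fin m → ℤ :=
  fun i => ⌊x i + 1 / 2⌋

/-- A real random variable `X` is `σ`-subgaussian: it is centered and its moment generating
function satisfies `E[exp (l X)] ≤ exp (l² σ² / 2)` for every `l ∈ ℝ`. -/
def RealSubgaussian {Ω : Type*} [MeasurableSpace Ω] (μ : Measure Ω) (σ : ℝ)
    (X : Ω → ℝ) : Prop :=
  Integrable X μ ∧ (∫ ω, X ω ∂μ) = 0 ∧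
    ∀ l : ℝ, Integrable (fun ω => Real.exp (l * X ω)) μ ∧
      (∫ ω, Real.exp (l * X ω) ∂μ) ≤ Real.exp (l ^ 2 * σ ^ 2 / 2)

/-- An `ℝ^m`-valued random vector `X` is `σ`-subgaussian if `cᵀX` is `σ`-subgaussian for
every unit vector `c`. -/
def VecSubgaussian {Ω : Type*} [MeasurableSpace Ω] (μ : Measure Ω) {m : ℕ} (σ : ℝ)
    (X : Ω → Fin m → ℝ) : Prop :=
  ∀ c : Fin m → ℝ, eucNorm c = 1 → RealSubgaussian μ σ (fun ω => c ⬝ᵥ X ω)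

/-- The preimages of `1, …, g a` all lie in the cube of radius `zinf a`. -/
lemma pnat_le_pow {m : ℕ} (g : (Fin m → ℤ) ≃ ℕ+)
    (hg : ∀ a b : Fin m → ℤ, zinf b < zinf a → g b < g a) (a : Fin m → ℤ) :
    ((g a : ℕ+) : ℝ) ≤ (2 * (zinf a : ℝ) + 1) ^ m := by
  have hcard : (Finset.Icc 1 (g a)).card ≤
      (Fintype.piFinset (fun _ : Fin m => Finset.Icc (-(zinf a : ℤ)) (zinf a))).card := by
    apply Finset.card_le_card_of_injOn g.symm
    · intro z hz
      have hz' : z ≤ g a := (Finset.mem_Icc.1 hz).2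
      have hle : zinf (g.symm z) ≤ zinf a := by
        by_contra! h
        have := hg _ _ h
        rw [Equiv.apply_symm_apply] at this
        exact absurd hz' (not_le.2 this)
      rw [Finset.mem_coe, Fintype.mem_piFinset]
      intro i
      have hi : ((g.symm z) i).natAbs ≤ zinf (g.symm z) :=
        Finset.le_sup (f := fun j => ((g.symm z) j).natAbs) (Finset.mem_univ i)
      rw [Finset.mem_Icc]
      omega
    · exact g.symm.injective.injOn
  rw [PNat.card_Icc, Fintype.card_piFinset] at hcard
  simp only [Int.card_Icc, Finset.prod_const, Finset.card_univ, Fintype.card_fin, PNat.one_coe,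
    Nat.add_sub_cancel] at hcard
  have h2 : ((zinf a : ℤ) + 1 - -(zinf a : ℤ)).toNat = 2 * zinf a + 1 := by omega
  rw [h2] at hcard
  exact_mod_cast hcard

/-- Chernoff bound with the optimal parameter `l = t / σ²`. -/
lemma chernoff {Ω : Type*} [MeasurableSpace Ω] (μ : Measure Ω) [IsProbabilityMeasure μ]
    {σ : ℝ} (hσ : 0 < σ) {X : Ω → ℝ} (hX : RealSubgaussian μ σ X) {t : ℝ} (ht : 0 ≤ t) :
    μ.real {ω | t ≤ X ω} ≤ Real.exp (-(t ^ 2 / (2 * σ ^ 2))) := by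
  obtain ⟨hint, hle⟩ := hX.2.2 (t / σ ^ 2)
  refine (ProbabilityTheory.measure_ge_le_exp_mul_mgf t (by positivity) hint).trans ?_
  refine (mul_le_mul_of_nonneg_left hle (Real.exp_pos _).le).trans ?_
  rw [← Real.exp_add]
  apply le_of_eq
  congr 1
  field_simp
  ring

lemma prob_le_exp {Ω : Type*} [MeasurableSpace Ω] (μ : Measure Ω) [IsProbabilityMeasure μ]
    {m : ℕ} (hm : 1 ≤ m) (σ : ℝ) (hσ : 0 < σ) (Z : Ω → Fin m → ℝ)
    (hsub : VecSubgaussian μ σ Z) (a : Fin m → ℤ) :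
    μ.real {ω | roundv (Z ω) = a} ≤
      Real.exp (-(1 / (2 * σ ^ 2) * ((zinf a : ℝ) ^ 2 - zinf a))) := by
  rcases Nat.eq_zero_or_pos (zinf a) with h0 | hpos
  · simp [h0, measureReal_le_one]
  have : Nonempty (Fin m) := ⟨⟨0, hm⟩⟩
  obtain ⟨i, -, hi⟩ := Finset.exists_mem_eq_sup (Finset.univ : Finset (Fin m))
    Finset.univ_nonempty (fun j => (a j).natAbs)
  change zinf a = (a i).natAbs at hi
  have hk1 : (1 : ℝ) ≤ zinf a := by exact_mod_cast hpos
  -- `e` is the sign of the extremal coordinate `a i`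
  obtain ⟨e, he, hea⟩ : ∃ e : ℝ, (e = 1 ∨ e = -1) ∧ e * (a i : ℝ) = zinf a := by
    rcases Int.natAbs_eq (a i) with h | h
    · refine ⟨1, Or.inl rfl, ?_⟩
      rw [hi, one_mul]
      exact congrArg (Int.cast : ℤ → ℝ) h |>.trans (Int.cast_natCast _)
    · refine ⟨-1, Or.inr rfl, ?_⟩
      have h' : ((a i : ℤ) : ℝ) = -(((a i).natAbs : ℕ) : ℝ) := by
        rw [← Int.cast_natCast, ← Int.cast_neg, ← h]
      rw [hi, neg_one_mul, h', neg_neg]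
  have hc : eucNorm (Pi.single i e : Fin m → ℝ) = 1 := by
    have : ∑ j, (Pi.single i e : Fin m → ℝ) j ^ 2 = 1 := by
      rw [Finset.sum_eq_single i]
      · rcases he with rfl | rfl <;> simp
      · intro j _ hj; simp [hj]
      · simp
    rw [eucNorm, this, Real.sqrt_one]
  have hch := chernoff μ hσ (hsub _ hc) (t := (zinf a : ℝ) - 1 / 2) (by linarith)
  simp only [single_dotProduct] at hch
  have hsubset : {ω | roundv (Z ω) = a} ⊆ {ω | (zinf a : ℝ) - 1 / 2 ≤ e * Z ω i} := by
    intro ω hω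
    have h1 : ⌊Z ω i + 1 / 2⌋ = a i := congrFun hω i
    rw [Int.floor_eq_iff] at h1
    change (zinf a : ℝ) - 1 / 2 ≤ e * Z ω i
    rcases he with rfl | rfl <;> linarith [h1.1, h1.2]
  refine (measureReal_mono hsubset).trans (hch.trans ?_)
  apply Real.exp_le_exp.2
  have hs : 0 < 1 / (2 * σ ^ 2) := by positivity
  rw [div_eq_mul_one_div]
  nlinarith

/-- The truncation at `1` in an envelope is automatic for a probability. -/
lemma envelope_of_le {Ω : Type*} [MeasurableSpace Ω] (μ : Measure Ω) [IsProbabilityMeasure μ]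
    {S : Set Ω} {b : ℝ} (h : μ.real S ≤ b) : μ S ≤ ENNReal.ofReal (min b 1) := by
  rw [← ENNReal.ofReal_toReal (measure_ne_top μ S)]
  exact ENNReal.ofReal_le_ofReal (le_min h measureReal_le_one)

/-- Let `Z` be `σ`-subgaussian on `ℝ^m`, `Q` elementwise rounding, `g : ℤ^m → ℕ₊` a
monotone bijection and `q̄ = g(Q(Z))`. Then (i) the PMF of `q̄` lies in a power-law
envelope class with parameters `(2, β)`; (ii) if `m = 1` it lies in an exponential envelope
class with `α = 1/(8σ²)`, and if `m = 2` with `α = 1/(16σ²)`. -/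
theorem stmt14 {Ω : Type*} [MeasurableSpace Ω] (μ : Measure Ω) [IsProbabilityMeasure μ]
    {m : ℕ} (hm : 1 ≤ m) (σ : ℝ) (hσ : 0 < σ) (Z : Ω → Fin m → ℝ)
    (hZ : Measurable Z) (hsub : VecSubgaussian μ σ Z)
    (g : (Fin m → ℤ) ≃ ℕ+) (hg : ∀ a b : Fin m → ℤ, zinf b < zinf a → g b < g a) :
    (∃ β : ℝ, (2 : ℝ) ^ 2 / (∑' i : ℕ+, 1 / (i : ℝ) ^ 2) < β ∧
      ∀ z : ℕ+, μ {ω | g (roundv (Z ω)) = z} ≤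
        ENNReal.ofReal (min (β / (z : ℝ) ^ 2) 1)) ∧
    (m = 1 → ∃ β : ℝ, Real.exp (2 * (1 / (8 * σ ^ 2))) < β ∧
      ∀ z : ℕ+, μ {ω | g (roundv (Z ω)) = z} ≤
        ENNReal.ofReal (min (β * Real.exp (-(1 / (8 * σ ^ 2)) * (z : ℝ))) 1)) ∧
    (m = 2 → ∃ β : ℝ, Real.exp (2 * (1 / (16 * σ ^ 2))) < β ∧
      ∀ z : ℕ+, μ {ω | g (roundv (Z ω)) = z} ≤
        ENNReal.ofReal (min (β * Real.exp (-(1 / (16 * σ ^ 2)) * (z : ℝ))) 1)) := by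
  have key : ∀ z : ℕ+, ∃ k : ℕ, (z : ℝ) ≤ (2 * (k : ℝ) + 1) ^ m ∧
      μ.real {ω | g (roundv (Z ω)) = z} ≤
        Real.exp (-(1 / (2 * σ ^ 2) * ((k : ℝ) ^ 2 - k))) := by
    intro z
    refine ⟨zinf (g.symm z), ?_, ?_⟩
    · have := pnat_le_pow g hg (g.symm z)
      rwa [Equiv.apply_symm_apply] at this
    · have hset : {ω | g (roundv (Z ω)) = z} = {ω | roundv (Z ω) = g.symm z} := by
        ext ω
        exact (Equiv.eq_symm_apply g).symm
      rw [hset]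
      exact prob_le_exp μ hm σ hσ Z hsub _
  have h8 : 1 / (8 * σ ^ 2) = 1 / (2 * σ ^ 2) / 4 := by field_simp; norm_num
  have h16 : 1 / (16 * σ ^ 2) = 1 / (2 * σ ^ 2) / 8 := by field_simp; norm_num
  have hs : 0 < 1 / (2 * σ ^ 2) := by positivity
  rw [h8, h16]
  generalize 1 / (2 * σ ^ 2) = s at key hs
  refine ⟨?_, ?_, ?_⟩
  · -- `1 + (2 + s)² / (4 s)` is the maximum over real `k` of `2 k + 1 - s (k² - k)`
    set C : ℝ := (2 * m).factorial * Real.exp (1 + (2 + s) ^ 2 / (4 * s))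
    refine ⟨max C ((2 : ℝ) ^ 2 / (∑' i : ℕ+, 1 / (i : ℝ) ^ 2) + 1),
      lt_of_lt_of_le (lt_add_one _) (le_max_right _ _), fun z => envelope_of_le μ ?_⟩
    obtain ⟨k, hzk, hp⟩ := key z
    have hz : (0 : ℝ) < z := by exact_mod_cast z.pos
    rw [le_div_iff₀ (by positivity)]
    refine le_trans ?_ (le_max_left _ _)
    have hz2 : (z : ℝ) ^ 2 ≤ (2 * m).factorial * Real.exp (2 * k + 1) := by
      have h1 := Real.pow_div_factorial_le_exp (2 * (k : ℝ) + 1) (by positivity) (2 * m)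
      rw [div_le_iff₀ (by positivity)] at h1
      calc (z : ℝ) ^ 2 ≤ ((2 * (k : ℝ) + 1) ^ m) ^ 2 := by gcongr
        _ = (2 * (k : ℝ) + 1) ^ (2 * m) := by rw [← pow_mul, mul_comm m 2]
        _ ≤ _ := h1.trans_eq (mul_comm _ _)
    calc μ.real {ω | g (roundv (Z ω)) = z} * (z : ℝ) ^ 2
        ≤ Real.exp (-(s * ((k : ℝ) ^ 2 - k))) *
          ((2 * m).factorial * Real.exp (2 * k + 1)) := by gcongr
      _ = (2 * m).factorial * Real.exp (-(s * ((k : ℝ) ^ 2 - k)) + (2 * k + 1)) := by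
          rw [mul_left_comm, ← Real.exp_add]
      _ ≤ C := by
          refine mul_le_mul_of_nonneg_left (Real.exp_le_exp.2 ?_) (Nat.cast_nonneg _)
          have h2 : 1 + (2 + s) ^ 2 / (4 * s) - (-(s * ((k : ℝ) ^ 2 - k)) + (2 * k + 1))
              = (2 * s * k - (2 + s)) ^ 2 / (4 * s) := by
            field_simp
            ring
          have h3 : 0 ≤ (2 * s * k - (2 + s)) ^ 2 / (4 * s) := by positivity
          linarith
  · rintro rfl
    refine ⟨Real.exp (2 * s), Real.exp_lt_exp.2 (by linarith), fun z => envelope_of_le μ ?_⟩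
    obtain ⟨k, hzk, hp⟩ := key z
    refine hp.trans ?_
    rw [← Real.exp_add, Real.exp_le_exp]
    have h1 : s * (z : ℝ) ≤ s * (2 * (k : ℝ) + 1) ^ 1 := by gcongr
    nlinarith [mul_nonneg hs.le (sq_nonneg ((k : ℝ) - 3 / 4))]
  · rintro rfl
    refine ⟨Real.exp (2 * s), Real.exp_lt_exp.2 (by linarith), fun z => envelope_of_le μ ?_⟩
    obtain ⟨k, hzk, hp⟩ := key z
    refine hp.trans ?_
    rw [← Real.exp_add, Real.exp_le_exp]
    have h1 : s * (z : ℝ) ≤ s * (2 * (k : ℝ) + 1) ^ 2 := by gcongr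
    nlinarith [mul_nonneg hs.le (sq_nonneg ((k : ℝ) - 3 / 2))]
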